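/- Let I ⊆ ℝ be a nondegenerate interval, n ∈ ℕ, let ω = (ω_1,…,ω_n) be an n-dimensional positive Chebyshev system over I, and let ω_{n+1} : I → ℝ be such that ω* = (ω_1,…,ω_n,ω_{n+1}) is an (n+1)-dimensional positive Chebyshev system over I. Then a function f : I → ℝ is ω-Jensen convex on I if and only if D̲_{(𝟏_n,ω*)} f(p) ≥ 0 for all p ∈ I. -/

import Mathlib

/-!
The heart of the matter is a mean value inequality: for `x < y` in `I` some `p ∈ [x, y]` satisfies
`D̲_{(𝟏ₙ,ω*)} f(p) ≤ [x, …, y; f]_{ω*}`, where the tuple on the right is equally spaced.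

Removing one point from `n + 2` increasing points, the divided difference is at least the smaller
of those obtained by removing the first and the last point: subtracting from `f` a combination of
the `ωᵢ` that interpolates it at the `n` interior points leaves only the terms at the two ends.
Iterating this on a grid, the divided difference over any subtuple is bounded below by one over
consecutive grid points. Applied to every other point of the grid of `2n + 1` equally spaced points
of `[x, y]`, it yields a subinterval of half the length with no larger divided difference, and `p`
is the common point of the resulting nested intervals.
-/

/-- `Phi ω x` is the determinant `det(ωᵢ(xⱼ))` of an `n`-tuple of functions
evaluated at an `n`-tuple of points. -/
noncomputable def Phi {n : ℕ} (ω : Fin n → ℝ → ℝ) (x : Fin n → ℝ) : ℝ :=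
  (Matrix.of fun i j => ω i (x j)).det

/-- `ω` is an `n`-dimensional positive Chebyshev system over `H`:
`Phi ω` is positive on all strictly increasing `n`-tuples of elements of `H`. -/
def IsPosChebyshev {n : ℕ} (ω : Fin n → ℝ → ℝ) (H : Set ℝ) : Prop :=
  ∀ x : Fin n → ℝ, StrictMono x → (∀ j, x j ∈ H) → 0 < Phi ω x

/-- The generalized `ω*`-divided difference `[x₀,…,xₙ; f]_{ω*}`, where
`ω* = (ω₁,…,ωₙ,ω')`:  `Φ_{(ω,f)}(x) / Φ_{ω*}(x)`. -/
noncomputable def divDiff {n : ℕ} (ω : Fin n → ℝ → ℝ) (ω' : ℝ → ℝ) (f : ℝ → ℝ)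
    (x : Fin (n + 1) → ℝ) : ℝ :=
  Phi (Fin.snoc ω f) x / Phi (Fin.snoc ω ω') x

/-- The partial sum `t₁ + ⋯ + tⱼ` (empty for `j = 0`, everything for `j = n`). -/
noncomputable def psum {n : ℕ} (t : Fin n → ℝ) (j : Fin (n + 1)) : ℝ :=
  ∑ i ∈ Finset.univ.filter (fun i : Fin n => (i : ℕ) < (j : ℕ)), t i

/-- `f` is `(t,ω)`-convex on `J`:
`Φ_{(ω,f)}(x, x+t₁h, x+(t₁+t₂)h, …, x+(t₁+⋯+tₙ)h) ≥ 0`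
for all `x ∈ J` and `h > 0` with `x+(t₁+⋯+tₙ)h ∈ J`. -/
def TOmegaConvexOn {n : ℕ} (ω : Fin n → ℝ → ℝ) (t : Fin n → ℝ) (J : Set ℝ) (f : ℝ → ℝ) : Prop :=
  ∀ x ∈ J, ∀ h : ℝ, 0 < h → x + psum t (Fin.last n) * h ∈ J →
    0 ≤ Phi (Fin.snoc ω f) (fun j => x + psum t j * h)

/-- The tuple `x, ((T−s₁)x+s₁y)/T, …, ((T−s_{n−1})x+s_{n−1}y)/T, y`
where `sⱼ = t₁+⋯+tⱼ` and `T = sₙ`. -/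
noncomputable def jpts {n : ℕ} (t : Fin n → ℝ) (x y : ℝ) : Fin (n + 1) → ℝ :=
  fun j => ((psum t (Fin.last n) - psum t j) * x + psum t j * y) / psum t (Fin.last n)

/-- The lower Dinghas type derivative `D̲_{(t,ω*)} f(p)`: the limit, as `δ → 0⁺`, of
the infimum of `[x, ((T−s₁)x+s₁y)/T, …, y; f]_{ω*}` over `x,y ∈ I` with `x < y`,
`x ≤ p ≤ y`, `y − x < δ`; realized as a `liminf` (with values in `EReal`). -/
noncomputable def dinghasT {n : ℕ} (ω : Fin n → ℝ → ℝ) (ω' : ℝ → ℝ) (t : Fin n → ℝ)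
    (f : ℝ → ℝ) (I : Set ℝ) (p : ℝ) : EReal :=
  Filter.liminf (fun q : ℝ × ℝ => (divDiff ω ω' f (jpts t q.1 q.2) : EReal))
    (⨅ δ ∈ Set.Ioi (0 : ℝ), Filter.principal
      {q : ℝ × ℝ | q.1 ∈ I ∧ q.2 ∈ I ∧ q.1 < q.2 ∧ q.1 ≤ p ∧ p ≤ q.2 ∧ q.2 - q.1 < δ})

section Determinant

variable {n : ℕ}

lemma Phi_snoc_eq_sum (ω : Fin n → ℝ → ℝ) (f : ℝ → ℝ) (x : Fin (n + 1) → ℝ) :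
    Phi (Fin.snoc ω f) x =
      ∑ j : Fin (n + 1), (-1) ^ (n + (j : ℕ)) * f (x j) * Phi ω (x ∘ j.succAbove) := by
  unfold Phi
  rw [Matrix.det_succ_row _ (Fin.last n)]
  refine Finset.sum_congr rfl fun j _ => ?_
  have minor_eq : (Matrix.of fun i j => (Fin.snoc ω f : Fin (n + 1) → ℝ → ℝ) i (x j)).submatrix
      (Fin.last n).succAbove j.succAbove = Matrix.of fun i k => ω i ((x ∘ j.succAbove) k) := by
    ext a b
    simp
  rw [minor_eq]
  simp

/-- The map `f ↦ Φ_{(ω,f)}(x)`, written as its expansion along the last row, which makes its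
linearity apparent. -/
noncomputable def phiFunctional (ω : Fin n → ℝ → ℝ) (x : Fin (n + 1) → ℝ) :
    (ℝ → ℝ) →ₗ[ℝ] ℝ :=
  ∑ j : Fin (n + 1), ((-1) ^ (n + (j : ℕ)) * Phi ω (x ∘ j.succAbove)) • LinearMap.proj (x j)

lemma phiFunctional_apply (ω : Fin n → ℝ → ℝ) (x : Fin (n + 1) → ℝ) (f : ℝ → ℝ) :
    phiFunctional ω x f = Phi (Fin.snoc ω f) x := by
  simp only [phiFunctional, Phi_snoc_eq_sum, LinearMap.sum_apply, LinearMap.smul_apply,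
    LinearMap.proj_apply, smul_eq_mul]
  exact Finset.sum_congr rfl fun j _ => by ring

lemma Phi_snoc_sub_smul (ω : Fin n → ℝ → ℝ) (f g : ℝ → ℝ) (c : ℝ) (x : Fin (n + 1) → ℝ) :
    Phi (Fin.snoc ω (f - c • g)) x = Phi (Fin.snoc ω f) x - c * Phi (Fin.snoc ω g) x := by
  simp only [← phiFunctional_apply, map_sub, map_smul, smul_eq_mul]

lemma Phi_snoc_self (ω : Fin n → ℝ → ℝ) (i : Fin n) (x : Fin (n + 1) → ℝ) :
    Phi (Fin.snoc ω (ω i)) x = 0 := by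
  refine Matrix.det_zero_of_row_eq (Fin.castSucc_lt_last i).ne ?_
  ext j
  simp

lemma Phi_snoc_sub_sum_smul (ω : Fin n → ℝ → ℝ) (f : ℝ → ℝ) (c : Fin n → ℝ)
    (x : Fin (n + 1) → ℝ) :
    Phi (Fin.snoc ω (f - ∑ i, c i • ω i)) x = Phi (Fin.snoc ω f) x := by
  simp only [← phiFunctional_apply, map_sub, map_sum, map_smul]
  simp [phiFunctional_apply, Phi_snoc_self]

lemma Phi_snoc_eq_single {ω : Fin n → ℝ → ℝ} {f : ℝ → ℝ} {x : Fin (n + 1) → ℝ}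
    (k : Fin (n + 1)) (hf : ∀ j, j ≠ k → f (x j) = 0) :
    Phi (Fin.snoc ω f) x = (-1) ^ (n + (k : ℕ)) * f (x k) * Phi ω (x ∘ k.succAbove) := by
  rw [Phi_snoc_eq_sum]
  exact Finset.sum_eq_single k (fun j _ hj => by simp [hf j hj]) (by simp)

lemma exists_sum_smul_apply_eq {ω : Fin n → ℝ → ℝ} {x : Fin n → ℝ} (hx : Phi ω x ≠ 0)
    (f : ℝ → ℝ) : ∃ c : Fin n → ℝ, ∀ j, (∑ i, c i • ω i) (x j) = f (x j) := by
  obtain ⟨c, hc⟩ := Matrix.vecMul_surjective_iff_isUnit.mpr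
    ((Matrix.isUnit_iff_isUnit_det _).mpr hx.isUnit) (f ∘ x)
  refine ⟨c, fun j => ?_⟩
  simpa [Matrix.vecMul, dotProduct] using congrFun hc j

end Determinant

section RemovePoint

variable {n : ℕ} {ω : Fin n → ℝ → ℝ} {ω' f : ℝ → ℝ} {H : Set ℝ}

lemma Phi_snoc_comp_succAbove_nonneg_of_vanish (hω : IsPosChebyshev ω H) {z : Fin (n + 2) → ℝ}
    (hz : StrictMono z) (hzH : ∀ j, z j ∈ H)
    (vanish : ∀ j : Fin n, f (z j.castSucc.succ) = 0)
    (hlast : 0 ≤ Phi (Fin.snoc ω f) (z ∘ Fin.castSucc))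
    (hfirst : 0 ≤ Phi (Fin.snoc ω f) (z ∘ Fin.succ)) (k : Fin (n + 2)) :
    0 ≤ Phi (Fin.snoc ω f) (z ∘ k.succAbove) := by
  have interior_pos : 0 < Phi ω fun j => z j.castSucc.succ :=
    hω _ (hz.comp (Fin.strictMono_succ.comp Fin.strictMono_castSucc)) fun _ => hzH _
  have vanish' : ∀ j, j ≠ 0 → j ≠ Fin.last (n + 1) → f (z j) = 0 := by
    intro j hj0 hjl
    obtain ⟨i, rfl⟩ := Fin.exists_succ_eq_of_ne_zero hj0
    obtain ⟨m, rfl⟩ := Fin.exists_castSucc_eq.mpr fun h : i = Fin.last n =>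
      hjl (h ▸ Fin.succ_last n)
    exact vanish m
  have sign_first : 0 ≤ (-1) ^ n * f (z 0) := by
    rw [Phi_snoc_eq_single (x := z ∘ Fin.castSucc) 0 fun j hj =>
      vanish' _ (by simpa using hj) (Fin.castSucc_lt_last j).ne] at hlast
    exact nonneg_of_mul_nonneg_left (by simpa [Function.comp_def] using hlast) interior_pos
  have sign_last : 0 ≤ f (z (Fin.last (n + 1))) := by
    rw [Phi_snoc_eq_single (x := z ∘ Fin.succ) (Fin.last n) fun j hj =>
      vanish' _ (Fin.succ_ne_zero j) (by simpa [← Fin.succ_last] using hj)] at hfirst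
    exact nonneg_of_mul_nonneg_left (by simpa [Function.comp_def] using hfirst) interior_pos
  rw [Phi_snoc_eq_sum]
  refine Finset.sum_nonneg fun j _ => mul_nonneg ?_ (hω _ ?_ fun _ => hzH _).le
  · rcases eq_or_ne (k.succAbove j) 0 with h0 | h0
    · have hj : j = 0 := by grind [Fin.succAbove]
      subst hj
      simpa [h0] using sign_first
    rcases eq_or_ne (k.succAbove j) (Fin.last (n + 1)) with hl | hl
    · have hj : j = Fin.last n := by grind [Fin.succAbove]
      subst hj
      simpa [hl] using sign_last
    · simp [vanish' _ h0 hl]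
  · exact (hz.comp (Fin.strictMono_succAbove k)).comp (Fin.strictMono_succAbove j)

lemma Phi_snoc_comp_succAbove_nonneg (hω : IsPosChebyshev ω H) {z : Fin (n + 2) → ℝ}
    (hz : StrictMono z) (hzH : ∀ j, z j ∈ H)
    (hlast : 0 ≤ Phi (Fin.snoc ω f) (z ∘ Fin.castSucc))
    (hfirst : 0 ≤ Phi (Fin.snoc ω f) (z ∘ Fin.succ)) (k : Fin (n + 2)) :
    0 ≤ Phi (Fin.snoc ω f) (z ∘ k.succAbove) := by
  have interior_pos : 0 < Phi ω fun j => z j.castSucc.succ :=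
    hω _ (hz.comp (Fin.strictMono_succ.comp Fin.strictMono_castSucc)) fun _ => hzH _
  obtain ⟨c, hc⟩ := exists_sum_smul_apply_eq interior_pos.ne' f
  rw [← Phi_snoc_sub_sum_smul ω f c] at hlast hfirst ⊢
  exact Phi_snoc_comp_succAbove_nonneg_of_vanish (f := f - ∑ i, c i • ω i) hω hz hzH
    (fun j => sub_eq_zero.mpr (hc j).symm) hlast hfirst k

lemma le_divDiff_iff {x : Fin (n + 1) → ℝ} (hx : 0 < Phi (Fin.snoc ω ω') x) {c : ℝ} :
    c ≤ divDiff ω ω' f x ↔ 0 ≤ Phi (Fin.snoc ω (f - c • ω')) x := by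
  rw [divDiff, le_div_iff₀ hx, Phi_snoc_sub_smul, sub_nonneg]

lemma min_divDiff_le_divDiff_comp_succAbove (hω : IsPosChebyshev ω H)
    (hωs : IsPosChebyshev (Fin.snoc ω ω') H) {z : Fin (n + 2) → ℝ} (hz : StrictMono z)
    (hzH : ∀ j, z j ∈ H) (k : Fin (n + 2)) :
    min (divDiff ω ω' f (z ∘ Fin.castSucc)) (divDiff ω ω' f (z ∘ Fin.succ)) ≤
      divDiff ω ω' f (z ∘ k.succAbove) := by
  have pos {e : Fin (n + 1) → Fin (n + 2)} (he : StrictMono e) :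
      0 < Phi (Fin.snoc ω ω') (z ∘ e) := hωs _ (hz.comp he) fun _ => hzH _
  rw [le_divDiff_iff (pos (Fin.strictMono_succAbove k))]
  exact Phi_snoc_comp_succAbove_nonneg hω hz hzH
    ((le_divDiff_iff (pos Fin.strictMono_castSucc)).mp (min_le_left _ _))
    ((le_divDiff_iff (pos Fin.strictMono_succ)).mp (min_le_right _ _)) k

end RemovePoint

section Grid

lemma eq_add_or_exists_insert {n : ℕ} {e : Fin (n + 1) → ℕ} (he : StrictMono e) :
    (∀ j, e j = e 0 + j) ∨
      ∃ (e' : Fin (n + 2) → ℕ) (k : Fin (n + 2)), StrictMono e' ∧ e' ∘ k.succAbove = e ∧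
        e' 0 = e 0 ∧ e' (Fin.last (n + 1)) = e (Fin.last n) := by
  by_cases no_gap : ∀ j : Fin n, e j.succ ≤ e j.castSucc + 1
  · left
    intro j
    induction j using Fin.induction with
    | zero => simp
    | succ i ih =>
      have := he (Fin.castSucc_lt_succ (i := i))
      have := no_gap i
      simp only [Fin.val_castSucc, Fin.val_succ] at ih ⊢
      omega
  · right
    push Not at no_gap
    obtain ⟨i, gap⟩ := no_gap
    have removed (j) : Fin.insertNth (α := fun _ => ℕ) i.castSucc.succ (e i.castSucc + 1) e
        (i.castSucc.succ.succAbove j) = e j := Fin.insertNth_apply_succAbove ..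
    refine ⟨_, i.castSucc.succ, Fin.strictMono_insertNth he i _ (Nat.lt_succ_self _) gap,
      funext removed, ?_, ?_⟩
    · rw [← removed 0, Fin.succAbove_ne_zero_zero (Fin.succ_ne_zero _)]
    · rw [← removed (Fin.last n), Fin.succAbove_ne_last_last]
      simp [Fin.ext_iff, i.isLt.ne]

lemma strictMono_tuple_induction {n N : ℕ} {P : (Fin (n + 1) → ℕ) → Prop}
    (consecutive : ∀ a, a + n ≤ N → P fun j => a + j)
    (remove : ∀ e : Fin (n + 2) → ℕ, StrictMono e → e (Fin.last (n + 1)) ≤ N →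
      P (e ∘ Fin.castSucc) → P (e ∘ Fin.succ) → ∀ k : Fin (n + 2), P (e ∘ k.succAbove))
    {e : Fin (n + 1) → ℕ} (he : StrictMono e) (heN : e (Fin.last n) ≤ N) : P e := by
  induction hd : e (Fin.last n) - e 0 using Nat.strong_induction_on generalizing e with
  | _ d ih =>
    rcases eq_add_or_exists_insert he with hcons | ⟨e', k, he', removed, hzero, hlast⟩
    · rw [funext hcons]
      exact consecutive _ (by simpa [hcons (Fin.last n)] using heN)
    · have drop_last : e' (Fin.last n).castSucc < e' (Fin.last (n + 1)) :=
        he' (Fin.castSucc_lt_last _)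
      have drop_first : e' 0 < e' (Fin.succ 0) := he' (Fin.succ_pos _)
      have first_le : e' 0 ≤ e' (Fin.last n).castSucc := he'.monotone (Fin.zero_le _)
      refine removed ▸ remove e' he' (hlast ▸ heN)
        (ih _ ?_ (he'.comp Fin.strictMono_castSucc) ?_ rfl)
        (ih _ ?_ (he'.comp Fin.strictMono_succ) ?_ rfl) k <;>
        simp only [Function.comp_apply, Fin.castSucc_zero, Fin.succ_last, Nat.succ_eq_add_one] <;>
        omega

lemma exists_consecutive_divDiff_le {n N : ℕ} {ω : Fin n → ℝ → ℝ} {ω' : ℝ → ℝ} {H : Set ℝ}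
    (hω : IsPosChebyshev ω H) (hωs : IsPosChebyshev (Fin.snoc ω ω') H) (f : ℝ → ℝ)
    {z : ℕ → ℝ} (hz : StrictMono z) (hzH : ∀ a ≤ N, z a ∈ H)
    {e : Fin (n + 1) → ℕ} (he : StrictMono e) (heN : e (Fin.last n) ≤ N) :
    ∃ a, a + n ≤ N ∧
      divDiff ω ω' f (fun j : Fin (n + 1) => z (a + j)) ≤ divDiff ω ω' f (z ∘ e) := by
  refine strictMono_tuple_induction (P := fun e => ∃ a, a + n ≤ N ∧
    divDiff ω ω' f (fun j : Fin (n + 1) => z (a + j)) ≤ divDiff ω ω' f (z ∘ e))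
    (fun a ha => ⟨a, ha, le_rfl⟩) ?_ he heN
  rintro e he heN ⟨a, ha, hlast⟩ ⟨b, hb, hfirst⟩ k
  have hmin := min_divDiff_le_divDiff_comp_succAbove (f := f) hω hωs (hz.comp he)
    (fun j => hzH _ ((he.monotone (Fin.le_last j)).trans heN)) k
  rcases min_le_iff.mp hmin with h | h
  · exact ⟨a, ha, hlast.trans h⟩
  · exact ⟨b, hb, hfirst.trans h⟩

end Grid

section Points

variable {n : ℕ} {t : Fin n → ℝ}

lemma psum_zero (t : Fin n → ℝ) : psum t 0 = 0 := by
  simp [psum]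

lemma psum_one (j : Fin (n + 1)) : psum (fun _ : Fin n => 1) j = (j : ℕ) := by
  simp [psum, Fin.card_filter_val_lt, Nat.le_of_lt_succ j.isLt]

lemma psum_strictMono (ht : ∀ i, 0 < t i) : StrictMono (psum t) := by
  refine Fin.strictMono_iff_lt_succ.mpr fun i => ?_
  refine Finset.sum_lt_sum_of_subset (i := i) (fun k => ?_) (by simp) (by simp) (ht i)
    fun k _ _ => (ht k).le
  simp only [Finset.mem_filter, Finset.mem_univ, true_and, Fin.val_castSucc, Fin.val_succ]
  omega

lemma psum_last_pos (hn : 0 < n) (ht : ∀ i, 0 < t i) : 0 < psum t (Fin.last n) :=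
  psum_zero t ▸ psum_strictMono ht (Fin.lt_def.mpr hn)

lemma jpts_add_mul (hT : psum t (Fin.last n) ≠ 0) (x h : ℝ) :
    jpts t x (x + psum t (Fin.last n) * h) = fun j => x + psum t j * h := by
  ext j
  simp only [jpts]
  field_simp
  ring

lemma jpts_one_add_mul (hn : 0 < n) (x h : ℝ) :
    jpts (fun _ : Fin n => 1) x (x + n * h) = fun j : Fin (n + 1) => x + (j : ℕ) * h := by
  simpa [psum_one] using
    jpts_add_mul (psum_last_pos hn fun _ : Fin n => one_pos (α := ℝ)).ne' x h

lemma jpts_strictMono (hn : 0 < n) (ht : ∀ i, 0 < t i) {x y : ℝ} (hxy : x < y) :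
    StrictMono (jpts t x y) := by
  have hT := psum_last_pos hn ht
  intro i j hij
  have := mul_lt_mul_of_pos_right (psum_strictMono ht hij) (sub_pos.mpr hxy)
  exact div_lt_div_of_pos_right (by linarith) hT

lemma jpts_mem_Icc (hn : 0 < n) (ht : ∀ i, 0 < t i) {x y : ℝ} (hxy : x < y) (j : Fin (n + 1)) :
    jpts t x y j ∈ Set.Icc x y := by
  have hT := (psum_last_pos hn ht).ne'
  have jpts_zero : jpts t x y 0 = x := by simp [jpts, psum_zero, hT]
  have jpts_last : jpts t x y (Fin.last n) = y := by simp [jpts, hT]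
  have mono := (jpts_strictMono hn ht hxy).monotone
  exact ⟨jpts_zero.symm.trans_le (mono (Fin.zero_le j)), (mono (Fin.le_last j)).trans_eq jpts_last⟩

lemma IsPosChebyshev.Phi_jpts_pos {ω : Fin (n + 1) → ℝ → ℝ} {I : Set ℝ} (hω : IsPosChebyshev ω I)
    (hI : I.OrdConnected) (hn : 0 < n) (ht : ∀ i, 0 < t i) {x y : ℝ} (hx : x ∈ I) (hy : y ∈ I)
    (hxy : x < y) : 0 < Phi ω (jpts t x y) :=
  hω _ (jpts_strictMono hn ht hxy) fun j => hI.out hx hy (jpts_mem_Icc hn ht hxy j)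

lemma tOmegaConvexOn_iff_Phi_jpts_nonneg (hn : 0 < n) (ht : ∀ i, 0 < t i) {ω : Fin n → ℝ → ℝ}
    {I : Set ℝ} {f : ℝ → ℝ} :
    TOmegaConvexOn ω t I f ↔
      ∀ x ∈ I, ∀ y ∈ I, x < y → 0 ≤ Phi (Fin.snoc ω f) (jpts t x y) := by
  have hT := psum_last_pos hn ht
  constructor
  · intro hf x hx y hy hxy
    have hy_eq : y = x + psum t (Fin.last n) * ((y - x) / psum t (Fin.last n)) := by
      field_simp
      ring
    rw [hy_eq] at hy ⊢
    rw [jpts_add_mul hT.ne']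
    exact hf x hx _ (div_pos (sub_pos.mpr hxy) hT) hy
  · intro hf x hx h hh hy
    rw [← jpts_add_mul hT.ne']
    exact hf x hx _ hy (lt_add_of_pos_right x (mul_pos hT hh))

lemma tOmegaConvexOn_iff_divDiff_jpts_nonneg (hn : 0 < n) (ht : ∀ i, 0 < t i)
    {ω : Fin n → ℝ → ℝ} {ω' f : ℝ → ℝ} {I : Set ℝ} (hI : I.OrdConnected)
    (hωs : IsPosChebyshev (Fin.snoc ω ω') I) :
    TOmegaConvexOn ω t I f ↔ ∀ x ∈ I, ∀ y ∈ I, x < y → 0 ≤ divDiff ω ω' f (jpts t x y) := by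
  rw [tOmegaConvexOn_iff_Phi_jpts_nonneg hn ht]
  refine forall₅_congr fun x hx y hy hxy => ?_
  rw [divDiff, le_div_iff₀ (hωs.Phi_jpts_pos hI hn ht hx hy hxy), zero_mul]

end Points

section DinghasDerivative

/-- The pairs of points of `I` that enclose `p` and are less than `δ` apart, over which the infimum
in the lower Dinghas type derivative is taken. -/
def enclosingPairs (I : Set ℝ) (p δ : ℝ) : Set (ℝ × ℝ) :=
  {q | q.1 ∈ I ∧ q.2 ∈ I ∧ q.1 < q.2 ∧ q.1 ≤ p ∧ p ≤ q.2 ∧ q.2 - q.1 < δ}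

/-- The filter of the limit `δ → 0⁺` over enclosing pairs, along which the lower Dinghas type
derivative at `p` is a `liminf`. -/
def dinghasFilter (I : Set ℝ) (p : ℝ) : Filter (ℝ × ℝ) :=
  ⨅ δ ∈ Set.Ioi (0 : ℝ), Filter.principal (enclosingPairs I p δ)

lemma dinghasFilter_hasBasis (I : Set ℝ) (p : ℝ) :
    (dinghasFilter I p).HasBasis (0 < ·) (enclosingPairs I p) := by
  simp only [dinghasFilter, Set.mem_Ioi]
  refine Filter.hasBasis_biInf_principal' (fun δ hδ ε hε => ⟨min δ ε, lt_min hδ hε, ?_⟩)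
    ⟨1, one_pos⟩
  constructor <;> rintro q ⟨h₁, h₂, hlt, hp₁, hp₂, hlen⟩
  · exact ⟨h₁, h₂, hlt, hp₁, hp₂, hlen.trans_le (min_le_left δ ε)⟩
  · exact ⟨h₁, h₂, hlt, hp₁, hp₂, hlen.trans_le (min_le_right δ ε)⟩

variable {n : ℕ} {ω : Fin n → ℝ → ℝ} {ω' : ℝ → ℝ} {t : Fin n → ℝ} {f : ℝ → ℝ} {I : Set ℝ}
  {p c : ℝ}

lemma le_dinghasT
    (h : ∀ x ∈ I, ∀ y ∈ I, x < y → x ≤ p → p ≤ y → c ≤ divDiff ω ω' f (jpts t x y)) :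
    c ≤ dinghasT ω ω' t f I p :=
  Filter.le_liminf_of_le (by isBoundedDefault) <|
    (dinghasFilter_hasBasis I p).eventually_iff.mpr ⟨1, one_pos,
      fun _ ⟨hx, hy, hxy, hxp, hpy, _⟩ => EReal.coe_le_coe_iff.mpr (h _ hx _ hy hxy hxp hpy)⟩

lemma dinghasT_le (h : ∀ δ > 0, ∃ x y, (x, y) ∈ enclosingPairs I p δ ∧
      divDiff ω ω' f (jpts t x y) ≤ c) :
    dinghasT ω ω' t f I p ≤ c := by
  refine Filter.liminf_le_of_frequently_le' <|
    (dinghasFilter_hasBasis I p).frequently_iff.mpr fun {δ} hδ => ?_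
  obtain ⟨x, y, hxy, hle⟩ := h δ hδ
  exact ⟨(x, y), hxy, EReal.coe_le_coe_iff.mpr hle⟩

end DinghasDerivative

section MeanValue

lemma exists_mem_Icc_forall_small_of_halving {P : ℝ → ℝ → Prop} {x y : ℝ} (hxy : x < y)
    (hP : P x y)
    (halve : ∀ a b, x ≤ a → a < b → b ≤ y → P a b →
      ∃ a' b', a ≤ a' ∧ b' ≤ b ∧ b' - a' = (b - a) / 2 ∧ P a' b') :
    ∃ p ∈ Set.Icc x y, ∀ δ > 0, ∃ a ∈ Set.Icc x p, ∃ b ∈ Set.Icc p y,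
      a < b ∧ b - a < δ ∧ P a b := by
  let S := {q : ℝ × ℝ // x ≤ q.1 ∧ q.1 < q.2 ∧ q.2 ≤ y ∧ P q.1 q.2}
  have next (q : S) : ∃ r : S, q.1.1 ≤ r.1.1 ∧ r.1.2 ≤ q.1.2 ∧
      r.1.2 - r.1.1 = (q.1.2 - q.1.1) / 2 := by
    obtain ⟨⟨a, b⟩, hxa, hab, hby, hq⟩ := q
    obtain ⟨a', b', ha, hb, hlen, hP'⟩ := halve a b hxa hab hby hq
    have hlt : a' < b' := sub_pos.mp (hlen ▸ half_pos (sub_pos.mpr hab))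
    exact ⟨⟨(a', b'), hxa.trans ha, hlt, hb.trans hby, hP'⟩, ha, hb, hlen⟩
  choose s left_le right_le length_half using next
  let u (k : ℕ) : S := s^[k] ⟨(x, y), le_rfl, hxy, le_rfl, hP⟩
  have u_succ (k) : u (k + 1) = s (u k) := Function.iterate_succ_apply' s k _
  have left_mono : Monotone fun k => (u k).1.1 :=
    monotone_nat_of_le_succ fun k => u_succ k ▸ left_le (u k)
  have right_anti : Antitone fun k => (u k).1.2 :=
    antitone_nat_of_succ_le fun k => u_succ k ▸ right_le (u k)
  have length (k) : (u k).1.2 - (u k).1.1 = (1 / 2) ^ k * (y - x) := by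
    induction k with
    | zero => simp [u]
    | succ k ih => rw [u_succ, length_half, ih]; ring
  have hp := Set.mem_iInter.mp <|
    left_mono.ciSup_mem_iInter_Icc_of_antitone right_anti fun k => (u k).2.2.1.le
  refine ⟨_, hp 0, fun δ hδ => ?_⟩
  have hyx : 0 < y - x := sub_pos.mpr hxy
  obtain ⟨k, hk⟩ := exists_pow_lt_of_lt_one (div_pos hδ hyx) (one_half_lt_one (α := ℝ))
  obtain ⟨hxa, hab, hby, hPk⟩ := (u k).2
  exact ⟨_, ⟨hxa, (hp k).1⟩, _, ⟨(hp k).2, hby⟩, hab, length k ▸ (lt_div_iff₀ hyx).mp hk, hPk⟩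

variable {n : ℕ} {ω : Fin n → ℝ → ℝ} {ω' : ℝ → ℝ} {I : Set ℝ} {x y : ℝ}

lemma exists_half_divDiff_jpts_le (hn : 0 < n) (hI : I.OrdConnected) (hω : IsPosChebyshev ω I)
    (hωs : IsPosChebyshev (Fin.snoc ω ω') I) (f : ℝ → ℝ) (hx : x ∈ I) (hy : y ∈ I)
    (hxy : x < y) :
    ∃ a b, x ≤ a ∧ b ≤ y ∧ b - a = (y - x) / 2 ∧
      divDiff ω ω' f (jpts (fun _ => 1) a b) ≤ divDiff ω ω' f (jpts (fun _ => 1) x y) := by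
  obtain ⟨h, hh, rfl⟩ : ∃ h > 0, y = x + n * (2 * h) :=
    ⟨(y - x) / (2 * n), div_pos (sub_pos.mpr hxy) (by positivity), by field_simp; ring⟩
  let z (a : ℕ) : ℝ := x + a * h
  have hz : StrictMono z := fun a b hab => by
    simpa [z] using mul_lt_mul_of_pos_right (Nat.cast_lt.mpr hab) hh
  have z_zero : z 0 = x := by simp [z]
  have z_end : z (2 * n) = x + n * (2 * h) := by simp only [z]; push_cast; ring
  have z_mem (a) (ha : a ≤ 2 * n) : z a ∈ I :=
    hI.out hx hy ⟨z_zero ▸ hz.monotone a.zero_le, z_end ▸ hz.monotone ha⟩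
  obtain ⟨a, ha, hle⟩ := exists_consecutive_divDiff_le hω hωs f hz z_mem
    (e := fun j : Fin (n + 1) => 2 * j) (fun i j hij => by simpa using hij) (by simp)
  have fine : jpts (fun _ => 1) (z a) (z a + n * h) = fun j : Fin (n + 1) => z (a + j) := by
    rw [jpts_one_add_mul hn]
    ext j
    simp only [z]; push_cast; ring
  have coarse : jpts (fun _ => 1) x (x + n * (2 * h)) = z ∘ fun j : Fin (n + 1) => 2 * (j : ℕ) := by
    rw [jpts_one_add_mul hn]
    ext j
    simp only [z, Function.comp_apply]; push_cast; ring
  have right_end : z a + n * h = z (a + n) := by simp only [z]; push_cast; ring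
  exact ⟨z a, z a + n * h, z_zero ▸ hz.monotone a.zero_le,
    right_end ▸ z_end ▸ hz.monotone ha, by ring, by rwa [fine, coarse]⟩

theorem exists_dinghasT_le_divDiff_jpts (hn : 0 < n) (hI : I.OrdConnected)
    (hω : IsPosChebyshev ω I) (hωs : IsPosChebyshev (Fin.snoc ω ω') I) (f : ℝ → ℝ)
    (hx : x ∈ I) (hy : y ∈ I) (hxy : x < y) :
    ∃ p ∈ Set.Icc x y, dinghasT ω ω' (fun _ => 1) f I p ≤
      divDiff ω ω' f (jpts (fun _ => 1) x y) := by
  have hsub : Set.Icc x y ⊆ I := hI.out hx hy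
  obtain ⟨p, hp, hsmall⟩ := exists_mem_Icc_forall_small_of_halving
    (P := fun a b => divDiff ω ω' f (jpts (fun _ => 1) a b) ≤
      divDiff ω ω' f (jpts (fun _ => 1) x y)) hxy le_rfl fun a b hxa hab hby hle => by
    obtain ⟨a', b', ha, hb, hlen, hle'⟩ := exists_half_divDiff_jpts_le hn hI hω hωs f
      (hsub ⟨hxa, hab.le.trans hby⟩) (hsub ⟨hxa.trans hab.le, hby⟩) hab
    exact ⟨a', b', ha, hb, hlen, hle'.trans hle⟩
  refine ⟨p, hp, dinghasT_le fun δ hδ => ?_⟩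
  obtain ⟨a, ha, b, hb, hab, hlen, hle⟩ := hsmall δ hδ
  exact ⟨a, b, ⟨hsub ⟨ha.1, ha.2.trans hp.2⟩, hsub ⟨hp.1.trans hb.1, hb.2⟩, hab, ha.2, hb.1, hlen⟩,
    hle⟩

end MeanValue

/-- **Corollary 8.** `f` is `ω`-Jensen convex on `I` (i.e. `(𝟏ₙ,ω)`-convex) if and
only if the lower Dinghas type derivative `D̲_{(𝟏ₙ,ω*)} f(p)` is nonnegative at every
point `p ∈ I`. -/
theorem jensenConvexOn_iff_dinghasT_nonneg
    (n : ℕ) (hn : 0 < n) (I : Set ℝ) (hI : I.OrdConnected)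
    (hne : ∃ a ∈ I, ∃ b ∈ I, a < b)
    (ω : Fin n → ℝ → ℝ) (ω' : ℝ → ℝ)
    (hω : IsPosChebyshev ω I) (hωs : IsPosChebyshev (Fin.snoc ω ω') I)
    (f : ℝ → ℝ) :
    TOmegaConvexOn ω (fun _ => (1 : ℝ)) I f ↔
      ∀ p ∈ I, 0 ≤ dinghasT ω ω' (fun _ => (1 : ℝ)) f I p := by
  rw [tOmegaConvexOn_iff_divDiff_jpts_nonneg hn (fun _ => one_pos) hI hωs]
  constructor
  · exact fun hf p _ => le_dinghasT fun x hx y hy hxy _ _ => hf x hx y hy hxy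
  · intro hD x hx y hy hxy
    obtain ⟨p, hp, hle⟩ := exists_dinghasT_le_divDiff_jpts hn hI hω hωs f hx hy hxy
    exact EReal.coe_nonneg.mp ((hD p (hI.out hx hy hp)).trans hle)
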